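/- arXiv:1705.00474 — 2 statements merged into one kernel-verified Lean document; each statement's English description precedes it below -/
import Mathlib

section
/- Corollary of Lemma 1: For any weights w_k ≥ 0, the supremum of the weighted secrecy objective Σ_{k∈K} w_k · max(f_k(R, Ω + Φ), 0) over all feasible triples (R, Ω, Φ) equals its supremum over the feasible triples with Φ = 0. -/
open Matrix BigOperators Finset ComplexOrder

noncomputable def logDet {p : Type*} [Fintype p] [DecidableEq p] (M : Matrix p p ℂ) : ℝ :=
  Real.log M.det.re

def blk {I : Type*} {n : I → ℕ} (M : Matrix (Σ i, Fin (n i)) (Σ i, Fin (n i)) ℂ) (i : I) :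
    Matrix (Fin (n i)) (Fin (n i)) ℂ :=
  M.submatrix (fun a => ⟨i, a⟩) (fun a => ⟨i, a⟩)

def psub {I : Type*} [DecidableEq I] {n : I → ℕ}
    (M : Matrix (Σ i, Fin (n i)) (Σ i, Fin (n i)) ℂ) (S : Finset I) :
    Matrix {j : Σ i, Fin (n i) // j.1 ∈ S} {j : Σ i, Fin (n i) // j.1 ∈ S} ℂ :=
  M.submatrix Subtype.val Subtype.val

def IsBlockDiag {I : Type*} {n : I → ℕ}
    (M : Matrix (Σ i, Fin (n i)) (Σ i, Fin (n i)) ℂ) : Prop :=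
  ∀ a b : Σ i, Fin (n i), a.1 ≠ b.1 → M a b = 0

noncomputable def gS {I : Type*} [Fintype I] [DecidableEq I] {n : I → ℕ} (S : Finset I)
    (R Ω : Matrix (Σ i, Fin (n i)) (Σ i, Fin (n i)) ℂ) : ℝ :=
  (∑ i ∈ S, logDet (blk (R + Ω) i)) - logDet (psub Ω S)

noncomputable def phi {p : Type*} [Fintype p] [DecidableEq p] (A B : Matrix p p ℂ) : ℝ :=
  logDet (A + B) - logDet B

noncomputable def fk {I : Type*} [Fintype I] [DecidableEq I] {n : I → ℕ}
    {K : Type*} [Fintype K] [DecidableEq K] {m e : K → ℕ}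
    (H : ∀ k : K, Matrix (Fin (m k)) (Σ i, Fin (n i)) ℂ)
    (G : ∀ k : K, Matrix (Fin (e k)) (Σ i, Fin (n i)) ℂ)
    (Sig : ∀ k : K, Matrix (Fin (m k)) (Fin (m k)) ℂ)
    (Z : ∀ k : K, Matrix (Fin (e k)) (Fin (e k)) ℂ)
    (k : K) (R : K → Matrix (Σ i, Fin (n i)) (Σ i, Fin (n i)) ℂ)
    (Θ : Matrix (Σ i, Fin (n i)) (Σ i, Fin (n i)) ℂ) : ℝ :=
  phi (H k * R k * (H k)ᴴ)
      ((∑ l ∈ Finset.univ.erase k, H k * R l * (H k)ᴴ) + H k * Θ * (H k)ᴴ + Sig k)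
  - phi (G k * R k * (G k)ᴴ)
      ((∑ l ∈ Finset.univ.erase k, G k * R l * (G k)ᴴ) + G k * Θ * (G k)ᴴ + Z k)

def Feasible {I : Type*} [Fintype I] [DecidableEq I] {n : I → ℕ}
    {K : Type*} [Fintype K] (C P : I → ℝ)
    (R : K → Matrix (Σ i, Fin (n i)) (Σ i, Fin (n i)) ℂ)
    (Ω Φ : Matrix (Σ i, Fin (n i)) (Σ i, Fin (n i)) ℂ) : Prop :=
  (∀ k, (R k).PosSemidef) ∧ Ω.PosDef ∧ Φ.PosSemidef ∧ IsBlockDiag Φ ∧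
  (∀ S : Finset I, S.Nonempty → gS S (∑ k, R k) Ω ≤ ∑ i ∈ S, C i) ∧
  (∀ i : I, ((blk (∑ k, R k) i).trace).re + ((blk Ω i).trace).re + ((blk Φ i).trace).re ≤ P i)

lemma aux_one_le_det {p : Type*} [Fintype p] [DecidableEq p] {M : Matrix p p ℂ}
    (hM : M.PosSemidef) : (1 : ℂ) ≤ (1 + M).det := by
  have hs := hM.1.spectral_theorem
  rw [Unitary.conjStarAlgAut_apply] at hs
  have h1 : 1 + M = (hM.1.eigenvectorUnitary : Matrix p p ℂ) *
      ((1 + diagonal (RCLike.ofReal ∘ hM.1.eigenvalues)) *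
        (star hM.1.eigenvectorUnitary : Matrix p p ℂ)) := by
    rw [add_mul, mul_add, ← mul_assoc, ← mul_assoc, ← hs]
    simp
  have hu : (star hM.1.eigenvectorUnitary : Matrix p p ℂ) *
      (hM.1.eigenvectorUnitary : Matrix p p ℂ) = 1 := by simp
  rw [h1, det_mul_comm, mul_assoc, hu, mul_one, ← diagonal_one, diagonal_add, det_diagonal]
  have h2 : ∀ i, (1 : ℝ) ≤ 1 + hM.1.eigenvalues i := fun i => by
    linarith [hM.eigenvalues_nonneg i]
  have h3 : (1 : ℝ) ≤ ∏ i, (1 + hM.1.eigenvalues i) := by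
    calc (1 : ℝ) = ∏ i : p, (1 : ℝ) := by simp
      _ ≤ _ := Finset.prod_le_prod (fun _ _ => zero_le_one) (fun i _ => h2 i)
  have h4 : (1 : ℂ) ≤ ((∏ i, (1 + hM.1.eigenvalues i) : ℝ) : ℂ) := by exact_mod_cast h3
  simpa using h4

lemma aux_factor {p : Type*} [Fintype p] [DecidableEq p] {M : Matrix p p ℂ}
    (hM : M.PosSemidef) : ∃ L : Matrix p p ℂ, M = L * Lᴴ := by
  open scoped MatrixOrder in
  obtain ⟨B, hB⟩ := CStarAlgebra.nonneg_iff_eq_star_mul_self.mp hM.nonneg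
  exact ⟨Bᴴ, by rw [hB]; simp [star_eq_conjTranspose]⟩

lemma aux_det_mono {p : Type*} [Fintype p] [DecidableEq p] {A Q : Matrix p p ℂ}
    (hA : A.PosDef) (hQ : Q.PosSemidef) : A.det ≤ (A + Q).det := by
  obtain ⟨L, rfl⟩ := aux_factor hQ
  rw [det_add_mul _ _ hA.det_pos.ne'.isUnit]
  have := aux_one_le_det (hA.inv.posSemidef.conjTranspose_mul_mul_same L)
  exact le_mul_of_one_le_right hA.det_pos.le this

lemma aux_inv {p q : Type*} [Fintype p] [DecidableEq p] [Fintype q] [DecidableEq q]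
    {A : Matrix p p ℂ} {B : Matrix q q ℂ} (E : Matrix p q ℂ) (hE : Eᴴ * E = 1)
    (hA : A.PosDef) (hB : B.PosDef) (h : (B - Eᴴ * A * E).PosSemidef) :
    (Eᴴ * A⁻¹ * E - B⁻¹).PosSemidef := by
  have h1 := hA.posSemidef.conjTranspose_mul_mul_same (A⁻¹ * E - E * B⁻¹)
  have h2 := h.conjTranspose_mul_mul_same (B⁻¹)
  have hAi : (A⁻¹)ᴴ = A⁻¹ := hA.inv.1
  have hBi : (B⁻¹)ᴴ = B⁻¹ := hB.inv.1
  have uA : IsUnit A.det := hA.det_pos.ne'.isUnit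
  have uB : IsUnit B.det := hB.det_pos.ne'.isUnit
  convert h1.add h2 using 1
  rw [conjTranspose_sub, conjTranspose_mul, conjTranspose_mul, hAi, hBi]
  have e1 : (Eᴴ * A⁻¹ - B⁻¹ * Eᴴ) * A * (A⁻¹ * E - E * B⁻¹) =
      Eᴴ * (A⁻¹ * A) * (A⁻¹ * E) - Eᴴ * (A⁻¹ * A) * E * B⁻¹ - B⁻¹ * Eᴴ * (A * A⁻¹) * E
        + B⁻¹ * (Eᴴ * A * E) * B⁻¹ := by
    simp only [Matrix.sub_mul, Matrix.mul_sub, Matrix.mul_assoc]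
    abel
  have e2 : B⁻¹ * (B - Eᴴ * A * E) * B⁻¹ = (B⁻¹ * B) * B⁻¹ - B⁻¹ * (Eᴴ * A * E) * B⁻¹ := by
    noncomm_ring
  rw [e1, e2, nonsing_inv_mul _ uA, mul_nonsing_inv _ uA, nonsing_inv_mul _ uB]
  simp only [mul_one, one_mul, Matrix.mul_one, Matrix.one_mul, hE, Matrix.mul_assoc]
  abel

lemma aux_det_re_pos {p : Type*} [Fintype p] [DecidableEq p] {A : Matrix p p ℂ}
    (hA : A.PosDef) : 0 < A.det.re := (Complex.pos_iff.mp hA.det_pos).1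

lemma aux_step {p q : Type*} [Fintype p] [DecidableEq p] [Fintype q] [DecidableEq q]
    {A : Matrix p p ℂ} {B F : Matrix q q ℂ} (E : Matrix p q ℂ) (hE : Eᴴ * E = 1)
    (hA : A.PosDef) (hB : B.PosDef) (h : (B - Eᴴ * A * E).PosSemidef) (hF : F.PosSemidef) :
    logDet (B + F) - logDet B ≤ logDet (A + E * F * Eᴴ) - logDet A := by
  have hi := aux_inv E hE hA hB h
  obtain ⟨L, rfl⟩ := aux_factor hF
  have uA : IsUnit A.det := hA.det_pos.ne'.isUnit
  have uB : IsUnit B.det := hB.det_pos.ne'.isUnit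
  have pB : (1 + Lᴴ * B⁻¹ * L).PosDef :=
    PosDef.one.add_posSemidef (hB.inv.posSemidef.conjTranspose_mul_mul_same L)
  have hle := aux_det_mono pB (hi.conjTranspose_mul_mul_same L)
  have e : 1 + Lᴴ * B⁻¹ * L + Lᴴ * (Eᴴ * A⁻¹ * E - B⁻¹) * L =
      1 + (E * L)ᴴ * A⁻¹ * (E * L) := by
    rw [conjTranspose_mul, Matrix.mul_sub, Matrix.sub_mul]
    simp only [Matrix.mul_assoc]
    abel
  rw [e] at hle
  have eA : A + E * (L * Lᴴ) * Eᴴ = A + (E * L) * (E * L)ᴴ := by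
    rw [conjTranspose_mul]; simp only [Matrix.mul_assoc]
  have pX : 0 < (1 + (E * L)ᴴ * A⁻¹ * (E * L)).det := pB.det_pos.trans_le hle
  have key : ∀ x y : ℂ, 0 < x → 0 < y → Real.log (x * y).re = Real.log x.re + Real.log y.re := by
    intro x y hx hy
    have hx' := Complex.pos_iff.mp hx
    have hy' := Complex.pos_iff.mp hy
    rw [Complex.mul_re, ← hx'.2, zero_mul, sub_zero, Real.log_mul hx'.1.ne' hy'.1.ne']
  unfold logDet
  rw [eA, det_add_mul _ _ uA, det_add_mul _ _ uB, key _ _ hA.det_pos pX,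
    key _ _ hB.det_pos pB.det_pos]
  have := Real.log_le_log (aux_det_re_pos pB) (Complex.le_def.mp hle).1
  linarith

lemma aux_block {I : Type*} [Fintype I] [DecidableEq I] {n : I → ℕ}
    {R Ω Φ : Matrix (Σ i, Fin (n i)) (Σ i, Fin (n i)) ℂ} (hR : R.PosSemidef) (hΩ : Ω.PosDef)
    (hΦ : Φ.PosSemidef) (hd : IsBlockDiag Φ) (S : Finset I) (T : Finset I) (hT : T ⊆ S) :
    (psub (Ω + Matrix.of fun a b => if a.1 ∈ T then Φ a b else 0) S).PosDef ∧
    ∑ i ∈ T, (logDet (blk (R + (Ω + Φ)) i) - logDet (blk (R + Ω) i)) ≤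
      logDet (psub (Ω + Matrix.of fun a b => if a.1 ∈ T then Φ a b else 0) S)
        - logDet (psub Ω S) := by
  induction T using Finset.induction_on with
  | empty =>
    have : (Ω + Matrix.of fun a b : (Σ i, Fin (n i)) => if a.1 ∈ (∅ : Finset I) then Φ a b else 0)
        = Ω := by ext a b; simp
    rw [this]
    exact ⟨hΩ.submatrix Subtype.val_injective, by simp⟩
  | insert i T hi ih =>
    obtain ⟨hA, hs⟩ := ih (fun x hx => hT (Finset.mem_insert_of_mem hx))
    have hiS : i ∈ S := hT (Finset.mem_insert_self _ _)
    set A := psub (Ω + Matrix.of fun a b => if a.1 ∈ T then Φ a b else 0) S with hAdef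
    let f : Fin (n i) → {j : Σ i, Fin (n i) // j.1 ∈ S} := fun c => ⟨⟨i, c⟩, hiS⟩
    have hf : Function.Injective f := by
      intro c d h
      simpa [f] using h
    let E : Matrix {j : Σ i, Fin (n i) // j.1 ∈ S} (Fin (n i)) ℂ :=
      Matrix.of fun a c => if a = f c then 1 else 0
    have hEs : Eᴴ = Matrix.of fun c a => if a = f c then 1 else 0 := by
      ext c a
      by_cases h : a = f c <;> simp [E, h]
    have hE : Eᴴ * E = 1 := by
      rw [hEs]
      ext c d
      simp [E, Matrix.mul_apply, Matrix.one_apply, hf.eq_iff, eq_comm]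
    have hEA : Eᴴ * A * E = blk Ω i := by
      have h1 : Eᴴ * A * E = A.submatrix f f := by
        rw [hEs]
        ext c d
        simp [E, Matrix.mul_apply]
      rw [h1]
      ext c d
      simp [A, psub, blk, f, hi]
    have hinj : Function.Injective (fun a : Fin (n i) => (⟨i, a⟩ : Σ i, Fin (n i))) :=
      fun a b h => by simpa using h
    have hB : (blk (R + Ω) i).PosDef := (hΩ.posSemidef_add hR).submatrix hinj
    have hF : (blk Φ i).PosSemidef := hΦ.submatrix _
    have hBA : (blk (R + Ω) i - Eᴴ * A * E).PosSemidef := by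
      rw [hEA]
      convert hR.submatrix (fun a : Fin (n i) => (⟨i, a⟩ : Σ i, Fin (n i))) using 1
      ext c d
      simp [blk]
    have hnew : psub (Ω + Matrix.of fun a b => if a.1 ∈ insert i T then Φ a b else 0) S
        = A + E * blk Φ i * Eᴴ := by
      rw [hEs]
      ext ⟨⟨a, c⟩, ha⟩ ⟨⟨b, d⟩, hb⟩
      by_cases hai : a = i
      · subst hai
        by_cases hbi : b = a
        · subst hbi
          simp [E, A, f, psub, blk, Matrix.mul_apply, hi]
        · have : ∀ x : Fin (n a), (⟨b, d⟩ : Σ i, Fin (n i)) ≠ ⟨a, x⟩ := by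
            intro x h; exact hbi (congrArg Sigma.fst h)
          simp [E, A, f, psub, Matrix.mul_apply, hi, this, hbi,
            hd ⟨a, c⟩ ⟨b, d⟩ (fun h => hbi h.symm)]
      · have : ∀ x : Fin (n i), (⟨a, c⟩ : Σ i, Fin (n i)) ≠ ⟨i, x⟩ := by
          intro x h; exact hai (congrArg Sigma.fst h)
        simp [E, A, f, psub, Matrix.mul_apply, hai, this]
    have hst := aux_step E hE hA hB hBA hF
    have hBF : blk (R + (Ω + Φ)) i = blk (R + Ω) i + blk Φ i := by
      ext c d; simp [blk, add_assoc]
    rw [hnew, Finset.sum_insert hi, hBF]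
    refine ⟨hA.add_posSemidef (hF.mul_mul_conjTranspose_same E), ?_⟩
    linarith

lemma aux_gS {I : Type*} [Fintype I] [DecidableEq I] {n : I → ℕ}
    {R Ω Φ : Matrix (Σ i, Fin (n i)) (Σ i, Fin (n i)) ℂ} (hR : R.PosSemidef) (hΩ : Ω.PosDef)
    (hΦ : Φ.PosSemidef) (hd : IsBlockDiag Φ) (S : Finset I) :
    gS S R (Ω + Φ) ≤ gS S R Ω := by
  have h := (aux_block hR hΩ hΦ hd S S (Finset.Subset.refl S)).2
  have e : psub (Ω + Matrix.of fun a b => if a.1 ∈ S then Φ a b else 0) S = psub (Ω + Φ) S := by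
    ext ⟨a, ha⟩ ⟨b, hb⟩
    simp [psub, ha]
  rw [e, Finset.sum_sub_distrib] at h
  unfold gS
  linarith

lemma aux_feasible {I : Type*} [Fintype I] [DecidableEq I] {n : I → ℕ}
    {K : Type*} [Fintype K] {C P : I → ℝ}
    {R : K → Matrix (Σ i, Fin (n i)) (Σ i, Fin (n i)) ℂ}
    {Ω Φ : Matrix (Σ i, Fin (n i)) (Σ i, Fin (n i)) ℂ} (h : Feasible C P R Ω Φ) :
    Feasible C P R (Ω + Φ) 0 := by
  obtain ⟨hR, hΩ, hΦ, hd, hg, hp⟩ := h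
  refine ⟨hR, hΩ.add_posSemidef hΦ, PosSemidef.zero, fun _ _ _ => rfl, fun S hS => ?_,
    fun i => ?_⟩
  · exact (aux_gS (posSemidef_sum _ fun k _ => hR k) hΩ hΦ hd S).trans (hg S hS)
  · have e : blk (Ω + Φ) i = blk Ω i + blk Φ i := rfl
    have e0 : blk (0 : Matrix (Σ i, Fin (n i)) (Σ i, Fin (n i)) ℂ) i = 0 := rfl
    have := hp i
    rw [e, e0, trace_add, trace_zero, Complex.add_re, Complex.zero_re]
    linarith

theorem corollary_sup_over_feasible_with_zero_artificial_noise
    {I : Type*} [Fintype I] [DecidableEq I] {n : I → ℕ}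
    {K : Type*} [Fintype K] [DecidableEq K] {m e : K → ℕ}
    (H : ∀ k : K, Matrix (Fin (m k)) (Σ i, Fin (n i)) ℂ)
    (G : ∀ k : K, Matrix (Fin (e k)) (Σ i, Fin (n i)) ℂ)
    (Sig : ∀ k : K, Matrix (Fin (m k)) (Fin (m k)) ℂ)
    (Z : ∀ k : K, Matrix (Fin (e k)) (Fin (e k)) ℂ)
    (hSig : ∀ k, (Sig k).PosDef) (hZ : ∀ k, (Z k).PosDef)
    (C P : I → ℝ) (hC : ∀ i, 0 ≤ C i) (hP : ∀ i, 0 ≤ P i)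
    (w : K → ℝ) (hw : ∀ k, 0 ≤ w k) :
    sSup {v : ℝ | ∃ (R : K → Matrix (Σ i, Fin (n i)) (Σ i, Fin (n i)) ℂ)
        (Ω Φ : Matrix (Σ i, Fin (n i)) (Σ i, Fin (n i)) ℂ),
        Feasible C P R Ω Φ ∧ v = ∑ k, w k * max (fk H G Sig Z k R (Ω + Φ)) 0}
      = sSup {v : ℝ | ∃ (R : K → Matrix (Σ i, Fin (n i)) (Σ i, Fin (n i)) ℂ)
        (Ω : Matrix (Σ i, Fin (n i)) (Σ i, Fin (n i)) ℂ),
        Feasible C P R Ω 0 ∧ v = ∑ k, w k * max (fk H G Sig Z k R (Ω + 0)) 0} := by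
  congr 1
  ext v
  constructor
  · rintro ⟨R, Ω, Φ, hf, rfl⟩
    exact ⟨R, Ω + Φ, aux_feasible hf, by rw [add_zero]⟩
  · rintro ⟨R, Ω, hf, rfl⟩
    exact ⟨R, Ω, 0, hf, rfl⟩
end

section
/- Monotonicity of the fronthaul rate function under added block-diagonal noise: for every Hermitian positive semidefinite R indexed by J, every Hermitian positive definite Ω indexed by J, every block-diagonal Hermitian positive semidefinite Φ indexed by J, and every nonempty S ⊆ I, one has g_S(R, Ω + Φ) ≤ g_S(R, Ω). In other words, adding independent per-block (artificial) noise to the quantization noise covariance can only decrease the required fronthaul rate. -/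
open Matrix BigOperators Finset ComplexOrder

lemma det_rank1 {p : Type*} [Fintype p] [DecidableEq p] (A : Matrix p p ℂ) (hA : A.PosDef)
    (w : p → ℂ) :
    (A + vecMulVec w (star w)).det = A.det * (1 + star w ⬝ᵥ (A⁻¹ *ᵥ w)) := by
  have hu : IsUnit A.det := (Matrix.isUnit_iff_isUnit_det A).1 hA.isUnit
  rw [Matrix.vecMulVec_eq Unit, Matrix.det_add_replicateCol_mul_replicateRow hu]
  congr 1
  rw [Matrix.dotProduct_mulVec]
  simp [Matrix.det_unique, Matrix.mul_apply, dotProduct, vecMul, replicateRow, replicateCol]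

lemma quad_le {p q : Type*} [Fintype p] [DecidableEq p] [Fintype q] [DecidableEq q]
    (A : Matrix p p ℂ) (hA : A.PosDef) (C : Matrix q q ℂ) (hC : C.PosDef)
    (E : Matrix p q ℂ) (hE : Eᴴ * E = 1) (hCE : (C - Eᴴ * A * E).PosSemidef) (v : q → ℂ) :
    star v ⬝ᵥ (C⁻¹ *ᵥ v) ≤ star (E *ᵥ v) ⬝ᵥ (A⁻¹ *ᵥ (E *ᵥ v)) := by
  have hu : IsUnit A.det := (Matrix.isUnit_iff_isUnit_det A).1 hA.isUnit
  have huC : IsUnit C.det := (Matrix.isUnit_iff_isUnit_det C).1 hC.isUnit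
  have h1 := hA.posSemidef.dotProduct_mulVec_nonneg (A⁻¹ *ᵥ (E *ᵥ v) - E *ᵥ (C⁻¹ *ᵥ v))
  have h2 := hCE.dotProduct_mulVec_nonneg (C⁻¹ *ᵥ v)
  have hAi : (A⁻¹)ᴴ = A⁻¹ := hA.inv.isHermitian
  have hCi : (C⁻¹)ᴴ = C⁻¹ := hC.inv.isHermitian
  have k1 : A⁻¹ * A = 1 := Matrix.nonsing_inv_mul A hu
  have k2 : A * A⁻¹ = 1 := Matrix.mul_nonsing_inv A hu
  have k3 : C⁻¹ * C = 1 := Matrix.nonsing_inv_mul C huC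
  have key : star v ⬝ᵥ ((Eᴴ * A⁻¹ * E - C⁻¹) *ᵥ v) =
    star (A⁻¹ *ᵥ (E *ᵥ v) - E *ᵥ (C⁻¹ *ᵥ v)) ⬝ᵥ (A *ᵥ (A⁻¹ *ᵥ (E *ᵥ v) - E *ᵥ (C⁻¹ *ᵥ v)))
    + star (C⁻¹ *ᵥ v) ⬝ᵥ ((C - Eᴴ * A * E) *ᵥ (C⁻¹ *ᵥ v)) := by
    have e1 : A⁻¹ *ᵥ (E *ᵥ v) - E *ᵥ (C⁻¹ *ᵥ v) = (A⁻¹ * E - E * C⁻¹) *ᵥ v := by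
      simp [Matrix.sub_mulVec, Matrix.mulVec_mulVec]
    rw [e1]
    simp only [Matrix.star_mulVec, Matrix.mulVec_mulVec, ← Matrix.dotProduct_mulVec]
    rw [← dotProduct_add, ← Matrix.add_mulVec]
    congr 2
    simp only [Matrix.conjTranspose_sub, Matrix.conjTranspose_mul, hAi, hCi]
    have a1 : (Eᴴ * A⁻¹ - C⁻¹ * Eᴴ) * (A * (A⁻¹ * E - E * C⁻¹)) =
      Eᴴ * (A⁻¹ * A) * A⁻¹ * E - Eᴴ * (A⁻¹ * A) * E * C⁻¹ - C⁻¹ * (Eᴴ * (A * A⁻¹) * E)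
        + C⁻¹ * Eᴴ * A * E * C⁻¹ := by
      simp only [Matrix.mul_sub, Matrix.sub_mul, Matrix.mul_assoc]
      abel
    have a2 : C⁻¹ * ((C - Eᴴ * A * E) * C⁻¹) = (C⁻¹ * C) * C⁻¹ - C⁻¹ * Eᴴ * A * E * C⁻¹ := by
      simp only [Matrix.mul_sub, Matrix.sub_mul, Matrix.mul_assoc]
    rw [a1, a2, k1, k2, k3]
    simp only [Matrix.mul_one, Matrix.one_mul, hE]
    abel
  have h3 := add_nonneg h1 h2
  rw [← key, Matrix.sub_mulVec, dotProduct_sub, sub_nonneg] at h3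
  refine h3.trans (le_of_eq ?_)
  simp only [Matrix.star_mulVec, Matrix.mulVec_mulVec, ← Matrix.dotProduct_mulVec, Matrix.mul_assoc]

lemma vmv_psd {p : Type*} [Fintype p] (w : p → ℂ) : (vecMulVec w (star w)).PosSemidef :=
  Matrix.posSemidef_vecMulVec_self_star w

lemma logDet_rank1 {p : Type*} [Fintype p] [DecidableEq p] (A : Matrix p p ℂ) (hA : A.PosDef)
    (w : p → ℂ) : logDet (A + vecMulVec w (star w)) =
      logDet A + Real.log (1 + (star w ⬝ᵥ (A⁻¹ *ᵥ w)).re) := by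
  have h0 := hA.inv.posSemidef.dotProduct_mulVec_nonneg w
  have hd := hA.det_pos
  rw [Complex.le_def] at h0
  rw [Complex.lt_def] at hd
  simp only [Complex.zero_re, Complex.zero_im] at h0 hd
  unfold logDet
  rw [det_rank1 A hA w, Complex.mul_re, ← hd.2]
  simp only [Complex.add_re, Complex.one_re, zero_mul, sub_zero]
  rw [Real.log_mul hd.1.ne' (by linarith [h0.1])]

lemma logDet_step {p q : Type*} [Fintype p] [DecidableEq p] [Fintype q] [DecidableEq q]
    (A : Matrix p p ℂ) (hA : A.PosDef) (C : Matrix q q ℂ) (hC : C.PosDef)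
    (E : Matrix p q ℂ) (hE : Eᴴ * E = 1) (hCE : (C - Eᴴ * A * E).PosSemidef) (v : q → ℂ) :
    logDet (C + vecMulVec v (star v)) - logDet C ≤
      logDet (A + vecMulVec (E *ᵥ v) (star (E *ᵥ v))) - logDet A := by
  rw [logDet_rank1 A hA, logDet_rank1 C hC]
  have h := quad_le A hA C hC E hE hCE v
  have h0 := hC.inv.posSemidef.dotProduct_mulVec_nonneg v
  rw [Complex.le_def] at h h0
  simp only [Complex.zero_re] at h0
  have := Real.log_le_log (by linarith [h0.1]) (add_le_add_right h.1 1)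
  linarith

/-- extend a vector on block `i` by zero -/
def extv {I : Type*} [DecidableEq I] {n : I → ℕ} (i : I) (v : Fin (n i) → ℂ) :
    (Σ i, Fin (n i)) → ℂ := fun a => if h : a.1 = i then v (h ▸ a.2) else 0

lemma extv_same {I : Type*} [DecidableEq I] {n : I → ℕ} (i : I) (v : Fin (n i) → ℂ)
    (a : Fin (n i)) : extv i v ⟨i, a⟩ = v a := by simp [extv]

lemma extv_ne {I : Type*} [DecidableEq I] {n : I → ℕ} (i : I) (v : Fin (n i) → ℂ)
    (a : Σ i, Fin (n i)) (h : a.1 ≠ i) : extv i v a = 0 := by simp [extv, h]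

lemma gS_step {I : Type*} [Fintype I] [DecidableEq I] {n : I → ℕ}
    (R Ω : Matrix (Σ i, Fin (n i)) (Σ i, Fin (n i)) ℂ)
    (hR : R.PosSemidef) (hΩ : Ω.PosDef) (S : Finset I) (i : I) (v : Fin (n i) → ℂ) :
    gS S R (Ω + vecMulVec (extv i v) (star (extv i v))) ≤ gS S R Ω := by
  unfold gS
  have hne : ∀ j, j ≠ i → blk (R + (Ω + vecMulVec (extv i v) (star (extv i v)))) j
      = blk (R + Ω) j := by
    intro j hj
    ext a b
    simp [blk, vecMulVec_apply, extv_ne i v ⟨j, a⟩ hj]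
  by_cases hi : i ∈ S
  · rw [← Finset.add_sum_erase S _ hi, ← Finset.add_sum_erase S _ hi]
    rw [Finset.sum_congr rfl (fun j hj => by rw [hne j (Finset.ne_of_mem_erase hj)])]
    let e : Fin (n i) → {j : Σ i, Fin (n i) // j.1 ∈ S} := fun a => ⟨⟨i, a⟩, hi⟩
    have he : Function.Injective e := by
      intro a b h
      simpa [e] using h
    let E : Matrix {j : Σ i, Fin (n i) // j.1 ∈ S} (Fin (n i)) ℂ :=
      (1 : Matrix _ _ ℂ).submatrix id e
    have hE : Eᴴ * E = 1 := by
      ext a b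
      simp [E, Matrix.mul_apply, Matrix.one_apply, he.eq_iff]
    have hEA : Eᴴ * psub Ω S * E = blk Ω i := by
      ext a b
      simp [E, Matrix.mul_apply, Matrix.one_apply, psub, blk, e]
    have hEv : E *ᵥ v = fun a => extv i v a.1 := by
      ext ⟨⟨j, a⟩, hj⟩
      by_cases h : j = i
      · subst h
        simp [E, mulVec, dotProduct, Matrix.one_apply, e, extv_same]
      · rw [extv_ne i v _ h]
        simp [E, mulVec, dotProduct, Matrix.one_apply, e, h]
    have hA : (psub Ω S).PosDef := hΩ.submatrix Subtype.val_injective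
    have hC : (blk (R + Ω) i).PosDef :=
      (hΩ.posSemidef_add hR).submatrix (fun a b h => by simpa using h)
    have hCE : (blk (R + Ω) i - Eᴴ * psub Ω S * E).PosSemidef := by
      rw [hEA]
      have : blk (R + Ω) i - blk Ω i = blk R i := by ext a b; simp [blk]
      rw [this]
      exact hR.submatrix _
    have := logDet_step _ hA _ hC E hE hCE v
    have r1 : blk (R + (Ω + vecMulVec (extv i v) (star (extv i v)))) i
        = blk (R + Ω) i + vecMulVec v (star v) := by
      ext a b
      simp [blk, vecMulVec_apply, extv_same, add_assoc]
    have r2 : psub (Ω + vecMulVec (extv i v) (star (extv i v))) S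
        = psub Ω S + vecMulVec (E *ᵥ v) (star (E *ᵥ v)) := by
      rw [hEv]
      ext a b
      simp [psub, vecMulVec_apply]
    rw [r1, r2]
    linarith
  · rw [Finset.sum_congr rfl (fun j hj => by rw [hne j (fun h => hi (h ▸ hj))])]
    have r2 : psub (Ω + vecMulVec (extv i v) (star (extv i v))) S = psub Ω S := by
      ext a b
      have : a.1.1 ≠ i := fun h => hi (h ▸ a.2)
      simp [psub, vecMulVec_apply, extv_ne i v _ this]
    rw [r2]

open scoped MatrixOrder in
lemma exists_factor {m : ℕ} (M : Matrix (Fin m) (Fin m) ℂ) (hM : M.PosSemidef) :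
    ∃ B : Matrix (Fin m) (Fin m) ℂ, M = B * Bᴴ := by
  obtain ⟨B, hB⟩ := CStarAlgebra.nonneg_iff_eq_mul_star_self.1 hM.nonneg
  exact ⟨B, hB⟩

theorem gS_anti_in_blockdiag_noise
    {I : Type*} [Fintype I] [DecidableEq I] {n : I → ℕ}
    (R Ω Φ : Matrix (Σ i, Fin (n i)) (Σ i, Fin (n i)) ℂ)
    (hR : R.PosSemidef) (hΩ : Ω.PosDef) (hΦ : Φ.PosSemidef) (hΦbd : IsBlockDiag Φ)
    (S : Finset I) (hS : S.Nonempty) :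
    gS S R (Ω + Φ) ≤ gS S R Ω := by
  have hf : ∀ i, ∃ B : Matrix (Fin (n i)) (Fin (n i)) ℂ, blk Φ i = B * Bᴴ :=
    fun i => exists_factor _ (hΦ.submatrix _)
  choose B hB using hf
  let W : (Σ i, Fin (n i)) → (Σ i, Fin (n i)) → ℂ := fun k => extv k.1 (fun a => B k.1 a k.2)
  have hsum : Φ = ∑ k, vecMulVec (W k) (star (W k)) := by
    ext ⟨i, a⟩ ⟨j, b⟩
    rw [Matrix.sum_apply, Fintype.sum_sigma, Finset.sum_eq_single i]
    · by_cases h : j = i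
      · subst h
        have := congrFun (congrFun (hB j) a) b
        simpa [blk, W, vecMulVec_apply, extv_same, Matrix.mul_apply] using this
      · rw [hΦbd _ _ (fun h' => h h'.symm)]
        symm
        apply Finset.sum_eq_zero
        intro k _
        simp [W, vecMulVec_apply, extv_ne i _ ⟨j, b⟩ h]
    · intro l _ hl
      apply Finset.sum_eq_zero
      intro k _
      simp [W, vecMulVec_apply, extv_ne l _ ⟨i, a⟩ hl.symm]
    · simp
  have main : ∀ T : Finset (Σ i, Fin (n i)),
      (Ω + ∑ k ∈ T, vecMulVec (W k) (star (W k))).PosDef ∧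
      gS S R (Ω + ∑ k ∈ T, vecMulVec (W k) (star (W k))) ≤ gS S R Ω := by
    intro T
    induction T using Finset.induction_on with
    | empty => simpa using hΩ
    | insert k T hk ih =>
      rw [Finset.sum_insert hk, add_comm (vecMulVec _ _), ← add_assoc]
      exact ⟨ih.1.add_posSemidef (vmv_psd _), (gS_step R _ hR ih.1 S k.1 _).trans ih.2⟩
  rw [hsum]
  exact (main Finset.univ).2
end
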